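/- Bracket generating property of the double forced periodic system: Assume Φ is admissible. Let gⁿ denote the constant vector field ∂/∂pₙ, and let L be the smallest set of smooth vector fields on ℝ^{2n} that contains f, g and gⁿ and is closed under Lie brackets. Then for every x ∈ ℝ^{2n}, the linear span of {X(x) : X ∈ L} equals ℝ^{2n}; i.e. the family {f, g, gⁿ} is bracket generating at every point of ℝ^{2n}. -/

import Mathlib

/-!
Fix a point `x` and let `𝓜` be the module, over germs at `x` of smooth functions, generated by the
iterated brackets of `f`, `∂/∂p₁`, `∂/∂pₙ` (`GermSpan`). By the Leibniz rule `𝓜` is closed under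
Lie brackets (`GermSpan.bracket`), and evaluating its elements at `x` gives vectors in the span in
question (`GermSpan.eval_mem`). So it is enough to put every constant coordinate field into `𝓜`.

Indices are cyclic. If `∂/∂p_j ∈ 𝓜`, then `[f, ∂/∂p_j] = -∂/∂q_j ∈ 𝓜`. The bracket
`[f, ∂/∂q_j]` is a combination of `∂/∂p_{j-1}`, `∂/∂p_j`, `∂/∂p_{j+1}`, the last with coefficient
`-Φ''(q_j - q_{j+1})`. Hence if `∂/∂p_{j-1}, ∂/∂p_j ∈ 𝓜`, then `Φ''(q_j - q_{j+1}) ∂/∂p_{j+1} ∈ 𝓜`,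
and repeated brackets with `∂/∂q_j` replace `Φ''` by any of its derivatives. An admissible `Φ` is
analytic and not affine, so some derivative of `Φ''` is nonzero at the value of `q_j - q_{j+1}` at
`x` (`exists_iteratedDeriv_ne_zero`); dividing by that coefficient near `x` gives
`∂/∂p_{j+1} ∈ 𝓜`. Induction from the pair `∂/∂pₙ, ∂/∂p₁` goes once around the cycle.
-/

open scoped BigOperators
open MeasureTheory Filter Set

noncomputable section

/-- The state space ℝ^{2n}, with coordinates (q,p). -/
abbrev State (n : ℕ) := (Fin n → ℝ) × (Fin n → ℝ)

/-- The drift vector field of the periodic multiparticle system,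
`f(q,p) = Σ p_k ∂/∂q_k + Σ (φ(q_{k-1}-q_k) - φ(q_k-q_{k+1})) ∂/∂p_k` with `φ = Φ'`,
with cyclic indexing in `Fin n`. -/
def drift (n : ℕ) [NeZero n] (Φ : ℝ → ℝ) (x : State n) : State n :=
  (x.2, fun k => deriv Φ (x.1 (k - 1) - x.1 k) - deriv Φ (x.1 k - x.1 (k + 1)))

/-- The momentum coordinate vector `e_{p_j} = ∂/∂p_j`. -/
def ep (n : ℕ) [NeZero n] (j : Fin n) : State n := (0, Pi.single j 1)

/-- The position coordinate vector `e_{q_j} = ∂/∂q_j`. -/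
def eq' (n : ℕ) [NeZero n] (j : Fin n) : State n := (Pi.single j 1, 0)

/-- `Φ` is admissible: real analytic, bounded below, and `Φ(y) → +∞` as `y → +∞`. -/
def Admissible (Φ : ℝ → ℝ) : Prop :=
  (∀ x, AnalyticAt ℝ Φ x) ∧ BddBelow (Set.range Φ) ∧ Tendsto Φ atTop atTop

/-- `Φ` is generic: for no `b` is `Φ''` even or odd about `b`. -/
def Generic (Φ : ℝ → ℝ) : Prop :=
  ∀ b : ℝ,
    (¬ ∀ t : ℝ, deriv (deriv Φ) (b + t) = deriv (deriv Φ) (b - t)) ∧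
    (¬ ∀ t : ℝ, deriv (deriv Φ) (b + t) = - deriv (deriv Φ) (b - t))

/-- Lie bracket of vector fields: `[X,Y](x) = DY(x)·X(x) − DX(x)·Y(x)`. -/
def lieBracket {n : ℕ} (X Y : State n → State n) : State n → State n :=
  fun x => fderiv ℝ Y x (X x) - fderiv ℝ X x (Y x)

/-- Admissible trajectory of the single forced system `ẋ = f(x) + u(t) g`
(in absolutely-continuous/integral form). -/
def IsTrajectory (n : ℕ) [NeZero n] (Φ : ℝ → ℝ) (θ : ℝ) (u : ℝ → ℝ)
    (x : ℝ → State n) : Prop :=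
  ContinuousOn x (Set.Icc 0 θ) ∧
  ∀ t ∈ Set.Icc 0 θ,
    x t = x 0 + ∫ s in (0:ℝ)..t, (drift n Φ (x s) + u s • ep n 0)

/-- The smallest family of vector fields containing `F` and closed under Lie brackets. -/
inductive LieGen (n : ℕ) (F : Set (State n → State n)) : (State n → State n) → Prop
  | base (X : State n → State n) (hX : X ∈ F) : LieGen n F X
  | bracket (X Y : State n → State n) (hX : LieGen n F X) (hY : LieGen n F Y) :
      LieGen n F (lieBracket X Y)

open scoped ContDiff Topology

/-! ### Germs of vector fields generated by a family -/

/-- Vector fields whose germ at `x` is a combination, with coefficients smooth near `x`, of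
iterated Lie brackets of elements of `F`. The constructor `congr` makes this a property of the
germ at `x`. -/
inductive GermSpan {n : ℕ} (F : Set (State n → State n)) (x : State n) :
    (State n → State n) → Prop
  | gen (X : State n → State n) (hX : LieGen n F X) : GermSpan F x X
  | add (X Y : State n → State n) (hX : GermSpan F x X) (hY : GermSpan F x Y) :
      GermSpan F x (X + Y)
  | smul (a : State n → ℝ) (X : State n → State n) (ha : ContDiffAt ℝ ∞ a x)
      (hX : GermSpan F x X) : GermSpan F x (fun y => a y • X y)
  | congr (X Y : State n → State n) (hXY : X =ᶠ[𝓝 x] Y) (hX : GermSpan F x X) : GermSpan F x Y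

lemma lieBracket_eq_vectorField {n : ℕ} (X Y : State n → State n) :
    lieBracket X Y = VectorField.lieBracket ℝ X Y := rfl

lemma LieGen.contDiff {n : ℕ} {F : Set (State n → State n)} (hF : ∀ X ∈ F, ContDiff ℝ ∞ X)
    {X : State n → State n} (hX : LieGen n F X) : ContDiff ℝ ∞ X := by
  induction hX with
  | base X hX => exact hF X hX
  | bracket X Y _ _ hX hY => exact hX.lieBracket_vectorField hY (by simp)

lemma eventually_differentiableAt {E G : Type*} [NormedAddCommGroup E] [NormedSpace ℝ E]
    [NormedAddCommGroup G] [NormedSpace ℝ G] {a : E → G} {x : E} (ha : ContDiffAt ℝ ∞ a x) :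
    ∀ᶠ y in 𝓝 x, DifferentiableAt ℝ a y := by
  have h1 : ContDiffAt ℝ 1 a x := ha.of_le (by exact_mod_cast le_top)
  filter_upwards [h1.eventually (by simp)] with y hy
  exact hy.differentiableAt (by simp)

namespace GermSpan

variable {n : ℕ} {F : Set (State n → State n)} {x : State n} {X Y : State n → State n}

lemma contDiffAt (hF : ∀ X ∈ F, ContDiff ℝ ∞ X) (hX : GermSpan F x X) :
    ContDiffAt ℝ ∞ X x := by
  induction hX with
  | gen X hX => exact (hX.contDiff hF).contDiffAt
  | add X Y _ _ hX hY => exact hX.add hY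
  | smul a X ha _ hX => exact ha.smul hX
  | congr X Y hXY _ hX => exact hX.congr_of_eventuallyEq hXY.symm

lemma eval_mem (hX : GermSpan F x X) :
    X x ∈ Submodule.span ℝ {v : State n | ∃ X : State n → State n, LieGen n F X ∧ X x = v} := by
  induction hX with
  | gen X hX => exact Submodule.subset_span ⟨X, hX, rfl⟩
  | add X Y _ _ hX hY => exact Submodule.add_mem _ hX hY
  | smul a X _ _ hX => exact Submodule.smul_mem _ _ hX
  | congr X Y hXY _ hX => exact hXY.eq_of_nhds ▸ hX

lemma neg (hX : GermSpan F x X) : GermSpan F x (-X) :=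
  (hX.smul (fun _ => -1) X contDiffAt_const).congr _ _ (.of_forall fun y => by simp)

/-- The coefficients of `GermSpan` include inverses of functions that do not vanish at `x`. -/
lemma cancel {a : State n → ℝ} (ha : ContDiffAt ℝ ∞ a x) (hax : a x ≠ 0)
    (h : GermSpan F x (fun y => a y • X y)) : GermSpan F x X := by
  refine (h.smul (fun y => (a y)⁻¹) _ (ha.inv hax)).congr _ _ ?_
  filter_upwards [ha.continuousAt.eventually_ne hax] with y hy
  simp [smul_smul, hy]

lemma fderiv_contDiffAt {a : State n → ℝ} (ha : ContDiffAt ℝ ∞ a x) (hX : ContDiffAt ℝ ∞ X x) :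
    ContDiffAt ℝ ∞ (fun y => fderiv ℝ a y (X y)) x :=
  (ha.fderiv_right (m := ∞) (by simp)).clm_apply hX

/-- Closure under brackets: induction on both arguments, using the Leibniz rule
`[X, aY] = X(a) Y + a [X, Y]`. -/
lemma bracket (hF : ∀ X ∈ F, ContDiff ℝ ∞ X) (hX : GermSpan F x X) (hY : GermSpan F x Y) :
    GermSpan F x (lieBracket X Y) := by
  have hXs := hX.contDiffAt hF
  induction hY with
  | gen Y hLY =>
    have hYs := (hLY.contDiff hF).contDiffAt (x := x)
    clear hXs
    induction hX with
    | gen X hLX => exact .gen _ (.bracket _ _ hLX hLY)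
    | add X X' hX hX' ih ih' =>
      refine (ih.add _ _ ih').congr _ _ ?_
      filter_upwards [eventually_differentiableAt (hX.contDiffAt hF),
        eventually_differentiableAt (hX'.contDiffAt hF)] with y hy hy'
      exact (VectorField.lieBracket_add_left hy hy').symm
    | smul a X ha hX ih =>
      have hd : ContDiffAt ℝ ∞ (fun y => -fderiv ℝ a y (Y y)) x := (fderiv_contDiffAt ha hYs).neg
      refine ((hX.smul _ _ hd).add _ _ (ih.smul a _ ha)).congr _ _ ?_
      filter_upwards [eventually_differentiableAt (hX.contDiffAt hF),
        eventually_differentiableAt ha] with y hy hay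
      exact (VectorField.lieBracket_smul_left hay hy).symm
    | congr X X' hXX' _ ih =>
      exact ih.congr _ _ (hXX'.lieBracket_vectorField .rfl)
  | add Y Y' hY hY' ih ih' =>
    refine (ih.add _ _ ih').congr _ _ ?_
    filter_upwards [eventually_differentiableAt (hY.contDiffAt hF),
      eventually_differentiableAt (hY'.contDiffAt hF)] with y hy hy'
    exact (VectorField.lieBracket_add_right hy hy').symm
  | smul a Y ha hY ih =>
    refine ((hY.smul _ _ (fderiv_contDiffAt ha hXs)).add _ _ (ih.smul a _ ha)).congr _ _ ?_
    filter_upwards [eventually_differentiableAt (hY.contDiffAt hF),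
      eventually_differentiableAt ha] with y hy hay
    exact (VectorField.lieBracket_smul_right hay hy).symm
  | congr Y Y' hYY' _ ih =>
    exact ih.congr _ _ (Filter.EventuallyEq.lieBracket_vectorField .rfl hYY')

end GermSpan

/-! ### Admissible potentials -/

lemma Admissible.contDiff {Φ : ℝ → ℝ} (h : Admissible Φ) : ContDiff ℝ ω Φ :=
  AnalyticOnNhd.contDiff fun x _ => h.1 x

lemma Admissible.contDiff_deriv {Φ : ℝ → ℝ} (h : Admissible Φ) : ContDiff ℝ ω (deriv Φ) :=
  AnalyticOnNhd.contDiff fun x _ => (h.1 x).deriv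

lemma Admissible.contDiff_deriv2 {Φ : ℝ → ℝ} (h : Admissible Φ) :
    ContDiff ℝ ω (deriv (deriv Φ)) :=
  AnalyticOnNhd.contDiff fun x _ => (h.1 x).deriv.deriv

/-- An affine function that tends to `+∞` at `+∞` is not bounded below. -/
lemma Admissible.deriv2_ne_zero {Φ : ℝ → ℝ} (h : Admissible Φ) : deriv (deriv Φ) ≠ 0 := by
  intro h0
  have hd : Differentiable ℝ Φ := h.contDiff.differentiable (by simp)
  have hd' : Differentiable ℝ (deriv Φ) := h.contDiff_deriv.differentiable (by simp)
  have hc : ∀ y, deriv Φ y = deriv Φ 0 := fun y =>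
    is_const_of_deriv_eq_zero hd' (fun z => congrFun h0 z) y 0
  have haff : ∀ y, Φ y = Φ 0 + deriv Φ 0 * y := by
    intro y
    have hd2 : ∀ z, HasDerivAt (fun t => Φ t - deriv Φ 0 * t) 0 z := fun z => by
      have := (hd z).hasDerivAt.sub ((hasDerivAt_id z).const_mul (deriv Φ 0))
      simpa [hc z] using! this
    have := is_const_of_deriv_eq_zero (fun z => (hd2 z).differentiableAt)
      (fun z => (hd2 z).deriv) y 0
    simp only [mul_zero, sub_zero] at this
    linarith
  obtain ⟨-, ⟨m, hm⟩, hlim⟩ := h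
  have hm' : ∀ y, m ≤ Φ y := fun y => hm ⟨y, rfl⟩
  obtain ⟨y, hy⟩ := (hlim.eventually_gt_atTop (2 * Φ 0 - m)).exists
  -- By affinity `Φ(-y) = 2 Φ(0) - Φ(y) < m`.
  have h1 := hm' (-y)
  rw [haff (-y)] at h1
  rw [haff y] at hy
  linarith

lemma Admissible.exists_iteratedDeriv_ne_zero {Φ : ℝ → ℝ} (h : Admissible Φ) (y : ℝ) :
    ∃ m, iteratedDeriv m (deriv (deriv Φ)) y ≠ 0 := by
  by_contra! hall
  have han : AnalyticAt ℝ (deriv (deriv Φ)) y := (h.1 y).deriv.deriv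
  have htop : analyticOrderAt (deriv (deriv Φ)) y = ⊤ := by
    refine ENat.eq_top_iff_forall_ge.2 fun m => ?_
    exact (natCast_le_analyticOrderAt_iff_iteratedDeriv_eq_zero han).2 fun i _ => hall i
  have hanN : AnalyticOnNhd ℝ (deriv (deriv Φ)) univ := fun x _ => (h.1 x).deriv.deriv
  exact h.deriv2_ne_zero (hanN.eq_of_eventuallyEq (g := 0) (fun x _ => analyticAt_const)
    (analyticOrderAt_eq_top.1 htop))

/-! ### Brackets with the drift -/

section Drift

variable {n : ℕ} [NeZero n] {Φ : ℝ → ℝ}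

lemma contDiff_drift (h : Admissible Φ) : ContDiff ℝ ∞ (drift n Φ) := by
  have hφ : ContDiff ℝ ∞ (deriv Φ) := h.contDiff_deriv.of_le le_top
  have hq : ∀ i : Fin n, ContDiff ℝ ∞ (fun x : State n => x.1 i) := fun i =>
    (contDiff_apply ℝ ℝ i).comp contDiff_fst
  refine contDiff_snd.prodMk (contDiff_pi.2 fun k => ?_)
  exact (hφ.comp ((hq _).sub (hq _))).sub (hφ.comp ((hq _).sub (hq _)))

lemma hasFDerivAt_fst_sub {n : ℕ} (i j : Fin n) (x : State n) :
    HasFDerivAt (fun x : State n => x.1 i - x.1 j)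
      (((ContinuousLinearMap.proj i : (Fin n → ℝ) →L[ℝ] ℝ) - ContinuousLinearMap.proj j).comp
        (ContinuousLinearMap.fst ℝ (Fin n → ℝ) (Fin n → ℝ))) x :=
  (((ContinuousLinearMap.proj i : (Fin n → ℝ) →L[ℝ] ℝ) - ContinuousLinearMap.proj j).comp
        (ContinuousLinearMap.fst ℝ (Fin n → ℝ) (Fin n → ℝ))).hasFDerivAt

lemma fderiv_comp_fst_sub {n : ℕ} {a : ℝ → ℝ} (ha : Differentiable ℝ a) (i j : Fin n) (x v : State n) :
    fderiv ℝ (fun x : State n => a (x.1 i - x.1 j)) x v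
      = deriv a (x.1 i - x.1 j) * (v.1 i - v.1 j) := by
  have := (ha (x.1 i - x.1 j)).hasDerivAt.comp_hasFDerivAt x (hasFDerivAt_fst_sub i j x)
  have h2 := this.fderiv
  simp only [Function.comp_def] at h2
  rw [h2]
  simp

lemma fderiv_drift (h : Admissible Φ) (x v : State n) :
    fderiv ℝ (drift n Φ) x v = (v.2, fun k =>
      deriv (deriv Φ) (x.1 (k - 1) - x.1 k) * (v.1 (k - 1) - v.1 k)
        - deriv (deriv Φ) (x.1 k - x.1 (k + 1)) * (v.1 k - v.1 (k + 1))) := by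
  have hφ : Differentiable ℝ (deriv Φ) := h.contDiff_deriv.differentiable (by simp)
  have hc : ∀ i j : Fin n, DifferentiableAt ℝ (fun x : State n => deriv Φ (x.1 i - x.1 j)) x :=
    fun i j => (hφ _).comp x (hasFDerivAt_fst_sub i j x).differentiableAt
  have hD : HasFDerivAt (drift n Φ) ((ContinuousLinearMap.snd ℝ (Fin n → ℝ) (Fin n → ℝ)).prod
      (ContinuousLinearMap.pi fun k =>
        fderiv ℝ (fun x : State n => deriv Φ (x.1 (k - 1) - x.1 k)) x
          - fderiv ℝ (fun x : State n => deriv Φ (x.1 k - x.1 (k + 1))) x)) x :=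
    hasFDerivAt_snd.prodMk (hasFDerivAt_pi.2 fun k =>
      (hc _ _).hasFDerivAt.sub (hc _ _).hasFDerivAt)
  rw [hD.fderiv]
  refine Prod.ext rfl (funext fun k => ?_)
  simp [fderiv_comp_fst_sub hφ]

lemma lieBracket_drift_const (v : State n) :
    lieBracket (drift n Φ) (fun _ => v) = fun x => -fderiv ℝ (drift n Φ) x v := by
  funext x
  simp [lieBracket]

lemma lieBracket_drift_ep (h : Admissible Φ) (j : Fin n) :
    lieBracket (drift n Φ) (fun _ => ep n j) = -fun _ => eq' n j := by
  rw [lieBracket_drift_const]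
  funext x
  simp only [fderiv_drift h, ep, eq', Pi.neg_apply]
  refine Prod.ext rfl (funext fun k => ?_)
  simp

lemma lieBracket_drift_eq' (h : Admissible Φ) (j : Fin n) (x : State n) :
    lieBracket (drift n Φ) (fun _ => eq' n j) x =
      -(deriv (deriv Φ) (x.1 j - x.1 (j + 1)) • ep n (j + 1)
        - (deriv (deriv Φ) (x.1 (j - 1) - x.1 j)
            + deriv (deriv Φ) (x.1 j - x.1 (j + 1))) • ep n j
        + deriv (deriv Φ) (x.1 (j - 1) - x.1 j) • ep n (j - 1)) := by
  rw [lieBracket_drift_const]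
  simp only [fderiv_drift h, ep, eq']
  refine Prod.ext (by simp) (funext fun k => ?_)
  have e1 : deriv (deriv Φ) (x.1 (k - 1) - x.1 k) * (Pi.single j (1 : ℝ) : Fin n → ℝ) (k - 1)
      = deriv (deriv Φ) (x.1 j - x.1 (j + 1)) * (Pi.single (j + 1) (1 : ℝ) : Fin n → ℝ) k := by
    by_cases hk : k = j + 1
    · subst hk; simp
    · rw [Pi.single_eq_of_ne hk, Pi.single_eq_of_ne (fun h => hk (by rw [← h]; simp))]; simp
  have e2 : deriv (deriv Φ) (x.1 k - x.1 (k + 1)) * (Pi.single j (1 : ℝ) : Fin n → ℝ) (k + 1)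
      = deriv (deriv Φ) (x.1 (j - 1) - x.1 j) * (Pi.single (j - 1) (1 : ℝ) : Fin n → ℝ) k := by
    by_cases hk : k = j - 1
    · subst hk; simp
    · rw [Pi.single_eq_of_ne hk, Pi.single_eq_of_ne (fun h => hk (by rw [← h]; simp))]; simp
  have e3 : deriv (deriv Φ) (x.1 (k - 1) - x.1 k) * (Pi.single j (1 : ℝ) : Fin n → ℝ) k
      = deriv (deriv Φ) (x.1 (j - 1) - x.1 j) * (Pi.single j (1 : ℝ) : Fin n → ℝ) k := by
    by_cases hk : k = j
    · subst hk; simp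
    · rw [Pi.single_eq_of_ne hk]; simp
  have e4 : deriv (deriv Φ) (x.1 k - x.1 (k + 1)) * (Pi.single j (1 : ℝ) : Fin n → ℝ) k
      = deriv (deriv Φ) (x.1 j - x.1 (j + 1)) * (Pi.single j (1 : ℝ) : Fin n → ℝ) k := by
    by_cases hk : k = j
    · subst hk; simp
    · rw [Pi.single_eq_of_ne hk]; simp
  simp only [Prod.snd_neg, Prod.snd_add, Prod.snd_sub, Prod.smul_snd, Pi.neg_apply, Pi.add_apply,
    Pi.sub_apply, Pi.smul_apply, smul_eq_mul]
  linear_combination -e1 - e2 + e3 + e4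

/-- If `a(q_j - q_{j+1}) ∂/∂p_{j+1}` is generated, so is the same field with `a` replaced by
any of its derivatives. -/
lemma germSpan_iteratedDeriv {F : Set (State n → State n)} (hF : ∀ X ∈ F, ContDiff ℝ ∞ X)
    (hn : 2 ≤ n) {x : State n} {j : Fin n} (hq : GermSpan F x (fun _ => eq' n j)) {a : ℝ → ℝ}
    (ha : ContDiff ℝ ∞ a)
    (h : GermSpan F x (fun y => a (y.1 j - y.1 (j + 1)) • ep n (j + 1))) (m : ℕ) :
    GermSpan F x (fun y => iteratedDeriv m a (y.1 j - y.1 (j + 1)) • ep n (j + 1)) := by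
  have hj : j + 1 ≠ j := by
    have : n ≠ 1 := by omega
    simpa using this
  induction m with
  | zero => simpa using h
  | succ m ih =>
    have hd : Differentiable ℝ (iteratedDeriv m a) := ha.differentiable_iteratedDeriv m
      (by exact_mod_cast ENat.natCast_lt_top m)
    refine (hq.bracket hF ih).congr _ _ (.of_forall fun y => ?_)
    have hc : DifferentiableAt ℝ
        (fun x : State n => iteratedDeriv m a (x.1 j - x.1 (j + 1))) y :=
      (hd _).comp y (hasFDerivAt_fst_sub j (j + 1) y).differentiableAt
    rw [lieBracket_eq_vectorField,
      VectorField.lieBracket_smul_right hc (differentiableAt_const _), fderiv_comp_fst_sub hd]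
    simp [VectorField.lieBracket, eq', iteratedDeriv_succ, Pi.single_eq_of_ne hj]

end Drift

/-- For admissible `Φ`, the family `{f, g, gⁿ}` (with `g = ∂/∂p₁`,
`gⁿ = ∂/∂pₙ`) is bracket generating at every point of ℝ^{2n}. -/
theorem bracket_generating_double_forced (n : ℕ) [NeZero n] (hn : 3 ≤ n) (Φ : ℝ → ℝ)
    (hadm : Admissible Φ) :
    ∀ x : State n,
      Submodule.span ℝ
        {v : State n | ∃ X : State n → State n,
          LieGen n {drift n Φ, fun _ => ep n 0, fun _ => ep n (-1)} X ∧ X x = v} = ⊤ := by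
  intro x
  set F : Set (State n → State n) := {drift n Φ, fun _ => ep n 0, fun _ => ep n (-1)} with hFdef
  have hF : ∀ X ∈ F, ContDiff ℝ ∞ X := by
    rintro X (rfl | rfl | rfl)
    · exact contDiff_drift hadm
    · exact contDiff_const
    · exact contDiff_const
  have hf : GermSpan F x (drift n Φ) := .gen _ (.base _ (by simp [hFdef]))
  have hq : ∀ j, GermSpan F x (fun _ => ep n j) → GermSpan F x (fun _ => eq' n j) := by
    intro j hj
    have := hf.bracket hF hj
    rw [lieBracket_drift_ep hadm] at this
    simpa using this.neg
  have hψ : ContDiff ℝ ∞ (deriv (deriv Φ)) := hadm.contDiff_deriv2.of_le le_top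
  have hcoef : ∀ {a : ℝ → ℝ} (i j : Fin n), ContDiff ℝ ∞ a →
      ContDiffAt ℝ ∞ (fun y : State n => a (y.1 i - y.1 j)) x := by
    intro a i j ha
    exact (ha.comp (((contDiff_apply ℝ ℝ i).comp contDiff_fst).sub
      ((contDiff_apply ℝ ℝ j).comp contDiff_fst))).contDiffAt
  have step : ∀ j, GermSpan F x (fun _ => ep n (j - 1)) → GermSpan F x (fun _ => ep n j) →
      GermSpan F x (fun _ => ep n (j + 1)) := by
    intro j hj' hj
    have h1 : GermSpan F x
        (fun y => deriv (deriv Φ) (y.1 j - y.1 (j + 1)) • ep n (j + 1)) := by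
      have hb := (hf.bracket hF (hq j hj)).neg
      have hc := hj.smul _ _ ((hcoef (j - 1) j hψ).add (hcoef j (j + 1) hψ))
      have hc' := (hj'.smul _ _ (hcoef (j - 1) j hψ)).neg
      refine ((hb.add _ _ hc).add _ _ hc').congr _ _ (.of_forall fun y => ?_)
      simp only [Pi.add_apply, Pi.neg_apply, lieBracket_drift_eq' hadm]
      module
    obtain ⟨m, hm⟩ := hadm.exists_iteratedDeriv_ne_zero (x.1 j - x.1 (j + 1))
    have hs : ContDiff ℝ ∞ (iteratedDeriv m (deriv (deriv Φ))) :=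
      AnalyticOnNhd.contDiff fun y _ => by
        rw [iteratedDeriv_eq_iterate]
        exact (hadm.1 y).deriv.deriv.iterated_deriv m
    exact (germSpan_iteratedDeriv hF (by omega) (hq j hj) hψ h1 m).cancel
      (hcoef j (j + 1) hs) hm
  have hp0 : GermSpan F x (fun _ => ep n 0) := .gen _ (.base _ (by simp [hFdef]))
  have hp1 : GermSpan F x (fun _ => ep n (-1)) := .gen _ (.base _ (by simp [hFdef]))
  have hall : ∀ m : ℕ, GermSpan F x (fun _ => ep n (Fin.ofNat n m - 1)) ∧
      GermSpan F x (fun _ => ep n (Fin.ofNat n m)) := by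
    intro m
    induction m with
    | zero => exact ⟨by simpa using hp1, by simpa using hp0⟩
    | succ m ih =>
      have hs : Fin.ofNat n (m + 1) = Fin.ofNat n m + 1 := by
        ext; simp [Fin.val_add]
      rw [hs, add_sub_cancel_right]
      exact ⟨ih.2, step _ ih.1 ih.2⟩
  have hp : ∀ j, GermSpan F x (fun _ => ep n j) := by
    intro j
    have := (hall j).2
    simpa using this
  rw [eq_top_iff]
  rintro ⟨u, v⟩ -
  have huv : ((u, v) : State n) = ∑ j, u j • eq' n j + ∑ j, v j • ep n j := by
    refine Prod.ext (funext fun k => ?_) (funext fun k => ?_)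
    · simp [eq', ep, Prod.fst_sum, Finset.sum_apply, Pi.single_apply]
    · simp [eq', ep, Prod.snd_sum, Finset.sum_apply, Pi.single_apply]
  rw [huv]
  exact Submodule.add_mem _
    (Submodule.sum_mem _ fun j _ => Submodule.smul_mem _ _ (hq j (hp j)).eval_mem)
    (Submodule.sum_mem _ fun j _ => Submodule.smul_mem _ _ (hp j).eval_mem)
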